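/- Let g be a finite-dimensional semisimple Lie algebra over ℂ. Let Z³ denote the space of alternating trilinear ℂ-valued 3-cocycles on g (alternating trilinear f with df = 0), let B³ ⊆ Z³ denote the subspace of 3-coboundaries (forms of the shape (dh)(x,y,z) = h([x,y],z) − h([x,z],y) + h([y,z],x) for an alternating bilinear h), and set H³(g) = Z³/B³. Then the linear map sending a symmetric invariant bilinear form B on g to the class of c_B, where c_B(x,y,z) = B([x,y],z), is a bijection from the space of symmetric invariant bilinear forms on g onto H³(g). -/

import Mathlib

set_option maxSynthPendingDepth 3
set_option maxHeartbeats 1000000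
set_option synthInstance.maxHeartbeats 400000

/-- Trilinear `ℂ`-valued forms on `g`. -/
abbrev Trilinear (g : Type*) [LieRing g] [LieAlgebra ℂ g] :=
  g →ₗ[ℂ] g →ₗ[ℂ] g →ₗ[ℂ] ℂ

variable (g : Type*) [LieRing g] [LieAlgebra ℂ g]

/-- The trilinear form `c_B (x, y, z) = B ⁅x, y⁆ z` attached to a bilinear form `B`. -/
noncomputable def cB (B : LinearMap.BilinForm ℂ g) : Trilinear g :=
  LinearMap.mk₂ ℂ (fun x y => B ⁅x, y⁆)
    (fun x x' y => by simp [add_lie])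
    (fun c x y => by simp [smul_lie])
    (fun x y y' => by simp [lie_add])
    (fun c x y => by simp [lie_smul])

/-- `Z³`: the space of alternating trilinear 3-cocycles on `g`. -/
noncomputable def Z3 : Submodule ℂ (Trilinear g) where
  carrier := {f | (∀ x z : g, f x x z = 0) ∧ (∀ x y : g, f x y x = 0) ∧ (∀ x y : g, f x y y = 0) ∧
    ∀ x₁ x₂ x₃ x₄ : g, f ⁅x₁, x₂⁆ x₃ x₄ - f ⁅x₁, x₃⁆ x₂ x₄ + f ⁅x₁, x₄⁆ x₂ x₃
      + f ⁅x₂, x₃⁆ x₁ x₄ - f ⁅x₂, x₄⁆ x₁ x₃ + f ⁅x₃, x₄⁆ x₁ x₂ = 0}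
  add_mem' := by
    rintro a b ⟨ha1, ha2, ha3, ha4⟩ ⟨hb1, hb2, hb3, hb4⟩
    refine ⟨fun x z => ?_, fun x y => ?_, fun x y => ?_, fun x₁ x₂ x₃ x₄ => ?_⟩ <;>
      simp only [LinearMap.add_apply]
    · rw [ha1, hb1]; ring
    · rw [ha2, hb2]; ring
    · rw [ha3, hb3]; ring
    · linear_combination ha4 x₁ x₂ x₃ x₄ + hb4 x₁ x₂ x₃ x₄
  zero_mem' :=
    ⟨fun x z => by simp, fun x y => by simp, fun x y => by simp,
      fun x₁ x₂ x₃ x₄ => by simp⟩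
  smul_mem' := by
    rintro c a ⟨ha1, ha2, ha3, ha4⟩
    refine ⟨fun x z => ?_, fun x y => ?_, fun x y => ?_, fun x₁ x₂ x₃ x₄ => ?_⟩ <;>
      simp only [LinearMap.smul_apply, smul_eq_mul]
    · rw [ha1]; ring
    · rw [ha2]; ring
    · rw [ha3]; ring
    · linear_combination c * ha4 x₁ x₂ x₃ x₄

/-- `B³`: the space of 3-coboundaries, i.e. trilinear forms of the shape
`(dh)(x, y, z) = h ⁅x, y⁆ z − h ⁅x, z⁆ y + h ⁅y, z⁆ x` for an alternating bilinear `h`. -/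
noncomputable def B3 : Submodule ℂ (Trilinear g) where
  carrier := {F | ∃ h : LinearMap.BilinForm ℂ g, (∀ x, h x x = 0) ∧
    ∀ x y z : g, F x y z = h ⁅x, y⁆ z - h ⁅x, z⁆ y + h ⁅y, z⁆ x}
  add_mem' := by
    rintro a b ⟨h, hAlt, hEq⟩ ⟨h', hAlt', hEq'⟩
    refine ⟨h + h', fun x => by simp [hAlt, hAlt'], fun x y z => ?_⟩
    simp only [LinearMap.add_apply]
    rw [hEq, hEq']; ring
  zero_mem' := ⟨0, by simp, by simp⟩
  smul_mem' := by
    rintro c a ⟨h, hAlt, hEq⟩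
    refine ⟨c • h, fun x => by simp [hAlt], fun x y z => ?_⟩
    simp only [LinearMap.smul_apply, smul_eq_mul]
    rw [hEq]; ring

/-- `H³(g) = Z³/B³`, the third cohomology of `g` with trivial coefficients. -/
abbrev H3 := Z3 g ⧸ (B3 g).comap (Z3 g).subtype

/-- The space of symmetric invariant bilinear forms on `g`. -/
noncomputable def symInvForms : Submodule ℂ (LinearMap.BilinForm ℂ g) where
  carrier := {B | (∀ x y : g, B x y = B y x) ∧ ∀ x y z : g, B ⁅z, x⁆ y + B x ⁅z, y⁆ = 0}
  add_mem' := by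
    rintro a b ⟨hs, hi⟩ ⟨hs', hi'⟩
    refine ⟨fun x y => ?_, fun x y z => ?_⟩ <;> simp only [LinearMap.add_apply]
    · rw [hs, hs']
    · linear_combination hi x y z + hi' x y z
  zero_mem' := ⟨fun x y => rfl, fun x y z => by simp⟩
  smul_mem' := by
    rintro c a ⟨hs, hi⟩
    refine ⟨fun x y => ?_, fun x y z => ?_⟩ <;>
      simp only [LinearMap.smul_apply, smul_eq_mul]
    · rw [hs]
    · linear_combination c * hi x y z

/-!
An alternating trilinear form `f` is a 2-cochain `x y ↦ f x y ·` with values in the coadjoint module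
`g*`, and a bilinear form is a 1-cochain with values in `g*`; under this identification the
alternating 3-cocycles are 2-cocycles. If `B` is invariant then `d₁₂ B = c_B`, while `d₁₂ h = -dh`
for alternating `h`. Hence injectivity and surjectivity reduce to Whitehead's lemmas
`H¹(g, g*) = 0` and `H²(g, g*) = 0`: if `c_B = dh`, then `B + h` is a 1-cocycle, so it is of the
form `(x, y) ↦ ξ ⁅y, x⁆` and its symmetric part `B` vanishes; and if `f = d₁₂ S`, then `f` is
cohomologous to `c_B` for the symmetric part `B` of `S`, which is invariant because `f` alternates.

Both Whitehead lemmas hold for any module `M` such that `d₀₁ : M → Hom(L, M)` has an equivariant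
retraction `C`. By Cartan's formula `y ∈ L` acts on a 1-cocycle `f` as `⁅y, f⁆ = d₀₁ (f y)`, so
`⁅y, C f⁆ = f y`, that is, `f = d₀₁ (C f)`; likewise a 2-cocycle `a` satisfies
`a = -d₁₂ (C ∘ a)`. For the coadjoint module of an algebra with nondegenerate Killing form, such a
`C` is given by a trace.
-/

section

open LieModule.Cohomology LieAlgebra Module

attribute [local instance 100] LieRing.ofAssociativeRing

variable {R L M : Type*} [CommRing R] [LieRing L] [LieAlgebra R L]
  [AddCommGroup M] [Module R M] [LieRingModule L M] [LieModule R L M]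

section EquivariantRetraction

variable (R L M) in
/-- The coboundary operator from `0`-cochains to `1`-cochains, `m ↦ (x ↦ ⁅x, m⁆)`. -/
def d₀₁ : M →ₗ[R] oneCochain R L M :=
  (LieModule.toEnd R L M : L →ₗ[R] End R M).flip

@[simp]
lemma d₀₁_apply_apply (m : M) (x : L) : d₀₁ R L M m x = ⁅x, m⁆ := rfl

lemma lie_eq_d₀₁_of_d₁₂_eq_zero {f : oneCochain R L M} (hf : d₁₂ R L M f = 0) (y : L) :
    ⁅y, f⁆ = d₀₁ R L M (f y) := by
  ext x
  have hyx : ⁅y, f x⁆ - ⁅x, f y⁆ - f ⁅y, x⁆ = 0 := by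
    rw [← d₁₂_apply_apply, hf]; rfl
  rw [LieHom.lie_apply, d₀₁_apply_apply, ← sub_eq_zero, ← hyx]
  abel

lemma lie_sub_lie_sub_eq_neg_d₀₁_of_d₂₃_eq_zero {a : twoCochain R L M}
    (ha : d₂₃ R L M a = 0) (y z : L) :
    ⁅y, a z⁆ - ⁅z, a y⁆ - a ⁅y, z⁆ = - d₀₁ R L M (a y z) := by
  ext x
  have hxyz : ⁅x, a y z⁆ - ⁅y, a x z⁆ + ⁅z, a x y⁆ - a ⁅x, y⁆ z + a ⁅x, z⁆ y - a ⁅y, z⁆ x = 0 := by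
    rw [← d₂₃_apply, ha]; rfl
  simp only [LinearMap.sub_apply, LinearMap.neg_apply, LieHom.lie_apply, d₀₁_apply_apply]
  rw [← twoCochain_skew a x y, ← twoCochain_skew a x z, ← lie_skew y x, ← lie_skew z x,
    map_neg, map_neg, ← twoCochain_skew a ⁅x, y⁆ z, ← twoCochain_skew a ⁅x, z⁆ y,
    ← sub_eq_zero, ← hxyz, lie_neg, lie_neg]
  abel

variable {C : oneCochain R L M →ₗ⁅R,L⁆ M} (hC : ∀ m, C (d₀₁ R L M m) = m)
include hC

theorem d₀₁_retraction_eq_of_d₁₂_eq_zero {f : oneCochain R L M} (hf : d₁₂ R L M f = 0) :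
    d₀₁ R L M (C f) = f := by
  ext y
  rw [d₀₁_apply_apply, ← C.map_lie, lie_eq_d₀₁_of_d₁₂_eq_zero hf, hC]

theorem d₁₂_retraction_comp_eq_neg_of_d₂₃_eq_zero {a : twoCochain R L M}
    (ha : d₂₃ R L M a = 0) : d₁₂ R L M (C.toLinearMap ∘ₗ a.val) = -a := by
  ext y z
  calc d₁₂ R L M (C.toLinearMap ∘ₗ a.val) y z
      = ⁅y, C (a z)⁆ - ⁅z, C (a y)⁆ - C (a ⁅y, z⁆) := rfl
    _ = C (⁅y, a z⁆ - ⁅z, a y⁆ - a ⁅y, z⁆) := by simp only [map_sub, C.map_lie]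
    _ = -(a y z) := by rw [lie_sub_lie_sub_eq_neg_d₀₁_of_d₂₃_eq_zero ha, map_neg, hC]

end EquivariantRetraction

section CoadjointRetraction

lemma trace_lie_comp_toEnd (φ : M →ₗ[R] M) (x y : L) :
    LinearMap.trace R M (⁅y, φ⁆ ∘ₗ LieModule.toEnd R L M x) =
      -LinearMap.trace R M (φ ∘ₗ LieModule.toEnd R L M ⁅y, x⁆) := by
  have hφ : ⁅y, φ⁆ = -⁅φ, LieModule.toEnd R L M y⁆ := by
    ext m
    simp [Ring.lie_def]
  rw [hφ, LinearMap.neg_comp, map_neg, LieHom.map_lie]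
  exact congrArg Neg.neg (LinearMap.trace_lie_mul_eq φ _ _)

variable (K L : Type*) [Field K] [LieRing L] [LieAlgebra K L] [FiniteDimensional K L]
  [IsKilling K L]

/-- The isomorphism between the adjoint and the coadjoint module given by the Killing form. -/
noncomputable def killingEquivDual : L ≃ₗ⁅K,L⁆ Dual K L :=
  { (killingForm K L).toDual (IsKilling.killingForm_nondegenerate K L) with
    map_lie' := fun {x y} ↦ by
      ext z
      exact LieModule.traceForm_lieInvariant K L L x y z }

lemma killingEquivDual_apply_apply (x y : L) :
    killingEquivDual K L x y = killingForm K L x y := rfl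

/-- The map `f ↦ (x ↦ -tr (κ⁻¹ ∘ f ∘ ad x))`, where `κ : L ≃ Dual K L` is the Killing form. It is
an equivariant retraction of `d₀₁` for the coadjoint module. -/
noncomputable def coadjointRetraction : oneCochain K L (Dual K L) →ₗ⁅K,L⁆ Dual K L where
  toFun f := -(LinearMap.trace K L ∘ₗ
    LinearMap.mulLeft K ((killingEquivDual K L).symm.toLinearMap ∘ₗ f) ∘ₗ
      (ad K L : L →ₗ[K] End K L))
  map_add' f f' := by
    ext x
    simp [LinearMap.comp_add, add_mul, add_comm]
  map_smul' c f := by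
    ext x
    simp [LinearMap.comp_smul]
  map_lie' {y f} := by
    ext x
    have hκ : (killingEquivDual K L).symm.toLinearMap ∘ₗ ⁅y, f⁆ =
        ⁅y, (killingEquivDual K L).symm.toLinearMap ∘ₗ f⁆ := by
      ext z
      simp only [LinearMap.comp_apply, LieHom.lie_apply, map_sub]
      exact congrArg (· - _) ((killingEquivDual K L).symm.map_lie y (f z))
    change -LinearMap.trace K L ((_ ∘ₗ ⁅y, f⁆) ∘ₗ ad K L x) =
      - -LinearMap.trace K L ((_ ∘ₗ f) ∘ₗ ad K L ⁅y, x⁆)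
    rw [hκ]
    exact congrArg Neg.neg (trace_lie_comp_toEnd _ x y)

lemma coadjointRetraction_apply_apply (f : oneCochain K L (Dual K L)) (x : L) :
    coadjointRetraction K L f x =
      -LinearMap.trace K L ((killingEquivDual K L).symm.toLinearMap ∘ₗ f ∘ₗ ad K L x) := rfl

lemma coadjointRetraction_d₀₁ (ξ : Dual K L) :
    coadjointRetraction K L (d₀₁ K L (Dual K L) ξ) = ξ := by
  obtain ⟨v, rfl⟩ := (killingEquivDual K L).surjective ξ
  have hv : (killingEquivDual K L).symm.toLinearMap ∘ₗ
      d₀₁ K L (Dual K L) (killingEquivDual K L v) = -ad K L v := by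
    ext y
    change (killingEquivDual K L).symm ⁅y, killingEquivDual K L v⁆ = -⁅v, y⁆
    have hyv : ⁅y, killingEquivDual K L v⁆ = killingEquivDual K L ⁅y, v⁆ :=
      ((killingEquivDual K L).toLieModuleHom.map_lie y v).symm
    rw [hyv, LieModuleEquiv.symm_apply_apply, lie_skew]
  ext x
  rw [coadjointRetraction_apply_apply, ← LinearMap.comp_assoc, hv, LinearMap.neg_comp, map_neg,
    neg_neg, ← killingForm_apply_apply, killingEquivDual_apply_apply]

variable {K L} in
lemma isAlt_of_d₁₂_eq_zero {b : LinearMap.BilinForm K L} (hb : d₁₂ K L (Dual K L) b = 0) :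
    b.IsAlt := by
  intro x
  rw [← d₀₁_retraction_eq_of_d₁₂_eq_zero (coadjointRetraction_d₀₁ K L) hb]
  simp

end CoadjointRetraction

section CoadjointCochains

lemma d₁₂_dual_apply (b : LinearMap.BilinForm R L) (x y z : L) :
    d₁₂ R L (Dual R L) b x y z = b x ⁅y, z⁆ - b y ⁅x, z⁆ - b ⁅x, y⁆ z := by
  simp only [d₁₂_apply_apply, LinearMap.sub_apply, Module.Dual.lie_apply]
  ring

lemma d₁₂_dual_apply_of_isAlt {h : LinearMap.BilinForm R L} (hh : h.IsAlt) (x y z : L) :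
    d₁₂ R L (Dual R L) h x y z = -(h ⁅x, y⁆ z - h ⁅x, z⁆ y + h ⁅y, z⁆ x) := by
  rw [d₁₂_dual_apply, ← hh.neg_eq x, ← hh.neg_eq y]
  ring

lemma d₁₂_dual_apply_of_lieInvariant {B : LinearMap.BilinForm R L} (hB : B.lieInvariant L)
    (x y z : L) : d₁₂ R L (Dual R L) B x y z = B ⁅x, y⁆ z := by
  have hxy : B ⁅x, y⁆ z = B x ⁅y, z⁆ := by
    rw [← lie_skew, map_neg, LinearMap.neg_apply, hB, neg_neg]
  rw [d₁₂_dual_apply]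
  linear_combination -hB x y z - hxy

lemma twoCochain_dual_apply_rotate {a : twoCochain R L (Dual R L)} (ha : ∀ x, (a x).IsAlt)
    (x y z : L) : a x y z = a z x y := by
  rw [← (ha x).neg z y, ← twoCochain_skew a z x, LinearMap.neg_apply, neg_neg]

lemma d₂₃_dual_apply_of_isAlt {a : twoCochain R L (Dual R L)} (ha : ∀ x, (a x).IsAlt)
    (x y z w : L) :
    d₂₃ R L (Dual R L) a x y z w = -(a ⁅x, y⁆ z w - a ⁅x, z⁆ y w + a ⁅x, w⁆ y z
      + a ⁅y, z⁆ x w - a ⁅y, w⁆ x z + a ⁅z, w⁆ x y) := by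
  simp only [d₂₃_apply, LinearMap.sub_apply, LinearMap.add_apply, Module.Dual.lie_apply,
    twoCochain_dual_apply_rotate ha _ _ ⁅_, w⁆]
  ring

end CoadjointCochains

section ThirdCohomology

variable {g}

lemma lieInvariant_of_mem_symInvForms {B : LinearMap.BilinForm ℂ g} (hB : B ∈ symInvForms g) :
    B.lieInvariant g :=
  fun x y z ↦ eq_neg_of_add_eq_zero_left (hB.2 y z x)

lemma d₁₂_eq_cB {B : LinearMap.BilinForm ℂ g} (hB : B ∈ symInvForms g) :
    (d₁₂ ℂ g (Dual ℂ g) B).val = cB g B := by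
  ext x y z
  exact d₁₂_dual_apply_of_lieInvariant (lieInvariant_of_mem_symInvForms hB) x y z

lemma mem_Z3_iff (a : twoCochain ℂ g (Dual ℂ g)) :
    a.val ∈ Z3 g ↔ d₂₃ ℂ g (Dual ℂ g) a = 0 ∧ ∀ x, (a x).IsAlt := by
  constructor
  · rintro ⟨-, -, ha, hd⟩
    refine ⟨?_, ha⟩
    ext x y z w
    rw [d₂₃_dual_apply_of_isAlt ha]
    exact neg_eq_zero.mpr (hd x y z w)
  · rintro ⟨hd, ha⟩
    refine ⟨fun x z ↦ ?_, fun x y ↦ ?_, ha, fun x y z w ↦ ?_⟩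
    · rw [twoCochain_val_apply, twoCochain_alt, LinearMap.zero_apply]
    · exact (twoCochain_dual_apply_rotate ha x y x).trans (by simp)
    · refine neg_eq_zero.mp ((d₂₃_dual_apply_of_isAlt ha x y z w).symm.trans ?_)
      rw [hd]; rfl

lemma cB_mem_Z3 {B : LinearMap.BilinForm ℂ g} (hB : B ∈ symInvForms g) : cB g B ∈ Z3 g := by
  rw [← d₁₂_eq_cB hB, mem_Z3_iff]
  refine ⟨LinearMap.congr_fun (d₂₃_comp_d₁₂ ..) B, fun x y ↦ ?_⟩
  have hinv := lieInvariant_of_mem_symInvForms hB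
  rw [d₁₂_dual_apply_of_lieInvariant hinv, ← lie_skew, map_neg, LinearMap.neg_apply, hinv,
    lie_self, map_zero, neg_zero, neg_zero]

theorem eq_zero_of_cB_mem_B3 [FiniteDimensional ℂ g] [IsKilling ℂ g]
    {B : LinearMap.BilinForm ℂ g} (hB : B ∈ symInvForms g) (hB3 : cB g B ∈ B3 g) : B = 0 := by
  obtain ⟨h, hh, hBh⟩ := hB3
  have hcocycle : d₁₂ ℂ g (Dual ℂ g) (B + h) = 0 := by
    ext x y z
    rw [map_add, Submodule.coe_add, d₁₂_eq_cB hB]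
    change cB g B x y z + d₁₂ ℂ g (Dual ℂ g) h x y z = 0
    rw [hBh, d₁₂_dual_apply_of_isAlt hh, add_neg_cancel]
  refine LinearMap.BilinForm.ext_of_isSymm ⟨hB.1⟩ LinearMap.BilinForm.isSymm_zero fun x ↦ ?_
  simpa [hh x] using isAlt_of_d₁₂_eq_zero hcocycle x

lemma add_flip_mem_symInvForms {S : LinearMap.BilinForm ℂ g}
    (hS : ∀ x, (d₁₂ ℂ g (Dual ℂ g) S x).IsAlt) : S + S.flip ∈ symInvForms g := by
  refine ⟨fun x y ↦ add_comm _ _, fun x y z ↦ ?_⟩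
  have hzyx := (hS z).neg x y
  simp only [d₁₂_dual_apply] at hzyx
  simp only [LinearMap.add_apply, LinearMap.BilinForm.flip_apply]
  rw [← lie_skew y x] at hzyx
  simp only [map_neg] at hzyx
  linear_combination hzyx

theorem exists_cB_sub_mem_B3 [FiniteDimensional ℂ g] [IsKilling ℂ g] {f : Trilinear g}
    (hf : f ∈ Z3 g) : ∃ B ∈ symInvForms g, cB g B - f ∈ B3 g := by
  let a : twoCochain ℂ g (Dual ℂ g) := ⟨f, fun x ↦ LinearMap.ext (hf.1 x)⟩
  obtain ⟨hclosed, halt⟩ := (mem_Z3_iff a).mp hf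
  obtain ⟨S, hS⟩ : ∃ S, d₁₂ ℂ g (Dual ℂ g) S = a := by
    refine ⟨-((coadjointRetraction ℂ g).toLinearMap ∘ₗ a.val), ?_⟩
    rw [map_neg, d₁₂_retraction_comp_eq_neg_of_d₂₃_eq_zero (coadjointRetraction_d₀₁ ℂ g) hclosed,
      neg_neg]
  have hsum : S + S.flip ∈ symInvForms g := add_flip_mem_symInvForms (hS ▸ halt)
  let B : LinearMap.BilinForm ℂ g := (1 / 2 : ℂ) • (S + S.flip)
  let h : LinearMap.BilinForm ℂ g := (1 / 2 : ℂ) • (S - S.flip)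
  have hB : B ∈ symInvForms g := Submodule.smul_mem _ _ hsum
  have hh : h.IsAlt := fun x ↦ by simp [h]
  have hBh : B + h = S := by
    simp only [B, h]
    module
  refine ⟨B, hB, h, hh, fun x y z ↦ ?_⟩
  have hf_eq : f x y z = d₁₂ ℂ g (Dual ℂ g) B x y z + d₁₂ ℂ g (Dual ℂ g) h x y z := by
    rw [← LinearMap.add_apply, ← add_apply_apply, ← map_add, hBh, hS]; rfl
  simp only [LinearMap.sub_apply, hf_eq]
  rw [d₁₂_dual_apply_of_isAlt hh, ← d₁₂_eq_cB hB, twoCochain_val_apply]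
  ring

variable (g) in
/-- The linear map sending a symmetric invariant form `B` to the class of `c_B` in `H³(g)`. -/
noncomputable def cBClass : symInvForms g →ₗ[ℂ] H3 g :=
  ((B3 g).comap (Z3 g).subtype).mkQ ∘ₗ
    { toFun B := ⟨cB g B, cB_mem_Z3 B.2⟩
      map_add' _ _ := rfl
      map_smul' _ _ := rfl }

theorem cBClass_injective [FiniteDimensional ℂ g] [IsKilling ℂ g] :
    Function.Injective (cBClass g) := by
  rw [injective_iff_map_eq_zero]
  intro B hB
  have hB3 : cB g B ∈ B3 g :=
    (Submodule.Quotient.mk_eq_zero ((B3 g).comap (Z3 g).subtype)).mp hB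
  exact Subtype.ext (eq_zero_of_cB_mem_B3 B.2 hB3)

theorem cBClass_surjective [FiniteDimensional ℂ g] [IsKilling ℂ g] :
    Function.Surjective (cBClass g) := by
  intro q
  obtain ⟨f, rfl⟩ := Submodule.Quotient.mk_surjective _ q
  obtain ⟨B, hB, hBf⟩ := exists_cB_sub_mem_B3 f.2
  exact ⟨⟨B, hB⟩, (Submodule.Quotient.eq _).mpr hBf⟩

end ThirdCohomology

end

/-- For a finite-dimensional semisimple complex Lie algebra `g`, the linear
map sending a symmetric invariant bilinear form `B` to the class of
`c_B (x, y, z) = B ⁅x, y⁆ z` in `H³(g) = Z³/B³` is a bijection from the space of symmetric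
invariant bilinear forms onto `H³(g)`. -/
theorem symInvForms_equiv_H3 [FiniteDimensional ℂ g] [LieAlgebra.IsSemisimple ℂ g] :
    ∃ Φ : symInvForms g →ₗ[ℂ] H3 g,
      Function.Bijective Φ ∧
      ∀ B : symInvForms g, ∃ hB : cB g (B : LinearMap.BilinForm ℂ g) ∈ Z3 g,
        Φ B = Submodule.Quotient.mk (⟨cB g (B : LinearMap.BilinForm ℂ g), hB⟩ : Z3 g) := by
  exact ⟨cBClass g, ⟨cBClass_injective, cBClass_surjective⟩, fun B ↦ ⟨cB_mem_Z3 B.2, rfl⟩⟩
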